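/- Suppose 0 < φ ≤ π/2 and 2φ ≥ θ > φ. Then ω(θ,φ) > π/3. -/

import Mathlib

/-- `ω(θ, α, β) = arccos((cos θ - cos α cos β) / (sin α sin β))`. -/
noncomputable def omega2 (θ α β : ℝ) : ℝ :=
  Real.arccos ((Real.cos θ - Real.cos α * Real.cos β) / (Real.sin α * Real.sin β))

/-- `ω(θ, α) := ω(θ, α, α)`. -/
noncomputable def omega1 (θ α : ℝ) : ℝ := omega2 θ α α

/-!
`ω(θ, α, β)` is the angle opposite the side `θ` in a spherical triangle with sides `θ, α, β`; such
a triangle exists when its sides satisfy the triangle inequality and have total length at most `2π`.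
If `θ` is a longest side and `β ≤ α`, then `cos θ - cos α cos β ≤ cos α (1 - cos β)`, and, for acute
`α`, `2 cos α (1 - cos β) < (1 + cos β) (1 - cos β) = sin² β ≤ sin α sin β`. Hence `cos ω < 1 / 2`.
-/

section SphericalTriangle

open Real

variable {θ α β : ℝ}

lemma cos_add_le_cos_of_add_le_two_pi (hθ : 0 ≤ θ) (htri : θ ≤ α + β)
    (hper : θ + α + β ≤ 2 * π) : cos (α + β) ≤ cos θ := by
  rcases le_total (α + β) π with h | h
  · exact cos_le_cos_of_nonneg_of_le_pi hθ h htri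
  · rw [← cos_two_pi_sub (α + β)]
    exact cos_le_cos_of_nonneg_of_le_pi hθ (by linarith) (by linarith)

lemma two_mul_cos_mul_one_sub_cos_lt (hβ : 0 < β) (hβα : β ≤ α) (hα : α < π) :
    2 * cos α * (1 - cos β) < sin α * sin β := by
  have hsinα : 0 < sin α := sin_pos_of_pos_of_lt_pi (hβ.trans_le hβα) hα
  have hsinβ : 0 < sin β := sin_pos_of_pos_of_lt_pi hβ (hβα.trans_lt hα)
  have hcos : cos α ≤ cos β := cos_le_cos_of_nonneg_of_le_pi hβ.le hα.le hβα
  have hcosβ : 0 < 1 - cos β := by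
    simpa using cos_lt_cos_of_nonneg_of_le_pi le_rfl (hβα.trans hα.le) hβ
  rcases le_or_gt α (π / 2) with hacute | hobtuse
  · have hsin : sin β ≤ sin α :=
      sin_le_sin_of_le_of_le_pi_div_two (by linarith [pi_pos]) hacute hβα
    calc 2 * cos α * (1 - cos β) < (1 + cos β) * (1 - cos β) := by gcongr; linarith
      _ = sin β * sin β := by linear_combination -sin_sq_add_cos_sq β
      _ ≤ sin α * sin β := by gcongr
  · have hcosα : cos α ≤ 0 := cos_nonpos_of_pi_div_two_le_of_le hobtuse.le (by linarith)
    calc 2 * cos α * (1 - cos β) ≤ 0 :=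
          mul_nonpos_of_nonpos_of_nonneg (by linarith) hcosβ.le
      _ < sin α * sin β := mul_pos hsinα hsinβ

lemma two_mul_cos_sub_cos_mul_cos_lt (hα : 0 < α) (hβ : 0 < β) (hα' : α < π) (hβ' : β < π)
    (hθα : cos θ ≤ cos α) (hθβ : cos θ ≤ cos β) :
    2 * (cos θ - cos α * cos β) < sin α * sin β := by
  wlog hβα : β ≤ α generalizing α β
  · rw [mul_comm (cos α), mul_comm (sin α)]
    exact this hβ hα hβ' hα' hθβ hθα (le_of_not_ge hβα)
  calc 2 * (cos θ - cos α * cos β) ≤ 2 * (cos α - cos α * cos β) := by gcongr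
    _ = 2 * cos α * (1 - cos β) := by ring
    _ < sin α * sin β := two_mul_cos_mul_one_sub_cos_lt hβ hβα hα'

theorem stmt3_general (hα : 0 < α) (hβ : 0 < β) (hαθ : α ≤ θ) (hβθ : β ≤ θ)
    (htri : θ ≤ α + β) (hper : θ + α + β ≤ 2 * π) : π / 3 < omega2 θ α β := by
  have hθ : θ ≤ π := by linarith
  have hα' : α < π := by linarith
  have hβ' : β < π := by linarith
  have hsin : 0 < sin α * sin β :=
    mul_pos (sin_pos_of_pos_of_lt_pi hα hα') (sin_pos_of_pos_of_lt_pi hβ hβ')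
  have hlower : cos α * cos β - sin α * sin β ≤ cos θ :=
    cos_add α β ▸ cos_add_le_cos_of_add_le_two_pi (hα.le.trans hαθ) htri hper
  have hupper : 2 * (cos θ - cos α * cos β) < sin α * sin β :=
    two_mul_cos_sub_cos_mul_cos_lt hα hβ hα' hβ'
      (cos_le_cos_of_nonneg_of_le_pi hα.le hθ hαθ) (cos_le_cos_of_nonneg_of_le_pi hβ.le hθ hβθ)
  calc π / 3 = arccos (1 / 2) := by
        rw [← cos_pi_div_three, arccos_cos (by positivity) (by linarith [pi_pos])]
    _ < omega2 θ α β := by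
        refine arccos_lt_arccos ?_ ?_ (by norm_num)
        · rw [le_div_iff₀ hsin]
          linarith
        · rw [div_lt_iff₀ hsin]
          linarith

end SphericalTriangle

theorem stmt3 (θ φ : ℝ) (hφ : 0 < φ) (hφ2 : φ ≤ Real.pi / 2) (h1 : φ < θ)
    (h2 : θ ≤ 2 * φ) :
    Real.pi / 3 < omega1 θ φ :=
  stmt3_general hφ hφ h1.le h1.le (by linarith) (by linarith)
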